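/- If (X,d) is a nonempty compact monotone metric space with positive s-dimensional Hausdorff measure H^s(X) > 0 for some real s > 0, then there exists an s-Hölder function g : X → ℝ whose image g(X) is a non-degenerate closed interval. -/

import Mathlib

open MeasureTheory
open scoped ENNReal NNReal

/- Idea. Let `m` be the `s`-dimensional Hausdorff content, which vanishes only where `H^s` does but,
unlike `H^s`, is finite on bounded sets. Some order interval `[p, q]` has positive content, and
`g x = m ([p, q] ∩ (-∞, x])` increases from `0` to `m [p, q]`. Its increment from `x` to `y` is at
most `m (x, y] ≤ (diam [x, y])^s ≤ C^s d(x, y)^s`, so `g` is `s`-Hölder; and `g` skips no value,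
because it could only do so across a gap of the order, where its increment is at most the content
of a point. -/

open Set Metric

section IntermediateValue

variable {X α : Type*} [LinearOrder X] [TopologicalSpace X] [CompactIccSpace X]
  [ClosedIicTopology X] [ClosedIciTopology X]
  [LinearOrder α] [TopologicalSpace α] [OrderClosedTopology α]

theorem Icc_subset_image_Icc_of_covBy {f : X → α} (hf : Continuous f)
    (hcov : ∀ x y, x ⋖ y → f y ≤ f x) {a b : X} (hab : a ≤ b) :
    Icc (f a) (f b) ⊆ f '' Icc a b := by
  rintro c ⟨hac, hcb⟩
  obtain ⟨x, ⟨⟨hax, hxb⟩, hxc⟩, hx⟩ :=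
    (isCompact_Icc.inter_right (isClosed_Iic.preimage hf)).exists_isGreatest
      (⟨a, left_mem_Icc.2 hab, hac⟩ : (Icc a b ∩ f ⁻¹' Iic c).Nonempty)
  obtain ⟨y, ⟨⟨hxy, hyb⟩, hcy⟩, hy⟩ :=
    (isCompact_Icc.inter_right (isClosed_Ici.preimage hf)).exists_isLeast
      (⟨b, right_mem_Icc.2 hxb, hcb⟩ : (Icc x b ∩ f ⁻¹' Ici c).Nonempty)
  refine ⟨x, ⟨hax, hxb⟩, le_antisymm hxc ?_⟩
  rcases hxy.eq_or_lt with rfl | hlt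
  · exact hcy
  have hgap : x ⋖ y := ⟨hlt, fun z hxz hzy ↦ by
    rcases le_total (f z) c with hzc | hcz
    · exact hxz.not_ge (hx ⟨⟨hax.trans hxz.le, hzy.le.trans hyb⟩, hzc⟩)
    · exact hzy.not_ge (hy ⟨⟨hxz.le, hzy.le.trans hyb⟩, hcz⟩)⟩
  exact le_trans hcy (hcov x y hgap)

end IntermediateValue

section SigmaCompact

variable {X : Type*} [LinearOrder X] [TopologicalSpace X] [SigmaCompactSpace X]
  [ClosedIicTopology X] [ClosedIciTopology X]

theorem exists_measure_Icc_ne_zero_of_measure_univ_ne_zero {m : OuterMeasure X}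
    (hm : m univ ≠ 0) : ∃ a b, a ≤ b ∧ m (Icc a b) ≠ 0 := by
  obtain ⟨n, hn⟩ : ∃ n, m (compactCovering X n) ≠ 0 := by
    contrapose! hm
    rw [← iUnion_compactCovering]
    exact measure_iUnion_null hm
  have hK : IsCompact (compactCovering X n) := isCompact_compactCovering X n
  have hne : (compactCovering X n).Nonempty :=
    nonempty_iff_ne_empty.2 fun h ↦ hn (h ▸ measure_empty)
  obtain ⟨a, ha, hleast⟩ := hK.exists_isLeast hne
  obtain ⟨b, -, hgreatest⟩ := hK.exists_isGreatest hne
  have hsub : compactCovering X n ⊆ Icc a b := fun x hx ↦ ⟨hleast hx, hgreatest hx⟩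
  exact ⟨a, b, hgreatest ha, fun h ↦ hn (measure_mono_null hsub h)⟩

end SigmaCompact

/-- The distribution function `x ↦ m (-∞, x]` of a finite outer measure on an ordered space;
the value is the junk `0` where `m (-∞, x]` is infinite. -/
noncomputable def distributionFunction {X : Type*} [Preorder X] (m : OuterMeasure X) (x : X) : ℝ :=
  (m (Iic x)).toReal

section DistributionFunction

variable {X : Type*} {m : OuterMeasure X}

theorem monotone_distributionFunction [Preorder X] (hm : m univ ≠ ∞) :
    Monotone (distributionFunction m) :=
  fun _ _ hxy ↦ ENNReal.toReal_mono (ne_top_of_le_ne_top hm (measure_mono (subset_univ _)))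
    (measure_mono (Iic_subset_Iic.2 hxy))

variable [LinearOrder X]

theorem distributionFunction_le_add (hm : m univ ≠ ∞) {x y : X} (hxy : x ≤ y) :
    distributionFunction m y ≤ distributionFunction m x + (m (Ioc x y)).toReal := by
  have hfin (A : Set X) : m A ≠ ∞ := ne_top_of_le_ne_top hm (measure_mono (subset_univ A))
  rw [distributionFunction, distributionFunction, ← ENNReal.toReal_add (hfin _) (hfin _),
    ← Iic_union_Ioc_eq_Iic hxy]
  exact ENNReal.toReal_mono (ENNReal.add_ne_top.2 ⟨hfin _, hfin _⟩) (measure_union_le _ _)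

theorem distributionFunction_le_of_covBy (hm : m univ ≠ ∞) {x y : X} (hxy : x ⋖ y)
    (hy : m {y} = 0) : distributionFunction m y ≤ distributionFunction m x := by
  simpa [hxy.Ioc_eq, hy] using distributionFunction_le_add hm hxy.le

theorem holderWith_distributionFunction [PseudoEMetricSpace X] {K s : ℝ≥0} (hm : m univ ≠ ∞)
    (hK : ∀ x y, x ≤ y → m (Ioc x y) ≤ K * edist x y ^ (s : ℝ)) :
    HolderWith K s (distributionFunction m) := by
  intro x y
  wlog hxy : x ≤ y generalizing x y
  · simpa only [edist_comm] using this y x (le_of_not_ge hxy)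
  calc edist (distributionFunction m x) (distributionFunction m y)
      = ENNReal.ofReal (distributionFunction m y - distributionFunction m x) := by
        rw [edist_comm, edist_dist, Real.dist_eq,
          abs_of_nonneg (sub_nonneg.2 (monotone_distributionFunction hm hxy))]
    _ ≤ m (Ioc x y) := ENNReal.ofReal_le_of_le_toReal
        (sub_le_iff_le_add'.2 (distributionFunction_le_add hm hxy))
    _ ≤ K * edist x y ^ (s : ℝ) := hK x y hxy

theorem range_distributionFunction_restrict_Icc [TopologicalSpace X] [CompactIccSpace X]
    [ClosedIicTopology X] [ClosedIciTopology X] {a b : X} (hab : a ≤ b) (hm : m (Icc a b) ≠ ∞)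
    (hatom : ∀ x, m {x} = 0)
    (hcont : Continuous (distributionFunction (OuterMeasure.restrict (Icc a b) m))) :
    range (distributionFunction (OuterMeasure.restrict (Icc a b) m)) =
      Icc 0 (m (Icc a b)).toReal := by
  set g := distributionFunction (OuterMeasure.restrict (Icc a b) m)
  have hg (x : X) : g x = (m (Iic x ∩ Icc a b)).toReal := by
    simp only [g, distributionFunction, OuterMeasure.restrict_apply]
  have hga : g a = 0 := by
    have : Iic a ∩ Icc a b = {a} := by
      rw [← Ici_inter_Iic, ← inter_assoc, Iic_inter_Ici, Icc_self]
      exact inter_eq_left.2 (singleton_subset_iff.2 hab)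
    rw [hg, this, hatom, ENNReal.toReal_zero]
  have hgb : g b = (m (Icc a b)).toReal := by
    rw [hg, inter_eq_right.2 Icc_subset_Iic_self]
  have hcov (x y : X) (hxy : x ⋖ y) : g y ≤ g x :=
    distributionFunction_le_of_covBy (by simpa using hm) hxy (by
      rw [OuterMeasure.restrict_apply]
      exact measure_mono_null inter_subset_left (hatom y))
  refine subset_antisymm ?_ ?_
  · rintro _ ⟨x, rfl⟩
    rw [hg]
    exact ⟨ENNReal.toReal_nonneg, ENNReal.toReal_mono hm (measure_mono inter_subset_right)⟩
  · rw [← hga, ← hgb]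
    exact (Icc_subset_image_Icc_of_covBy hcont hcov hab).trans (image_subset_range _ _)

end DistributionFunction

/-- The `s`-dimensional Hausdorff content `A ↦ inf ∑ (diam A_n)^s`, the infimum being over all
countable covers of `A`, of any mesh. Contrary to `H^s`, it is finite on bounded sets. -/
noncomputable def hausdorffContent (X : Type*) [PseudoEMetricSpace X] (s : ℝ) : OuterMeasure X :=
  OuterMeasure.boundedBy fun A ↦ ediam A ^ s

section HausdorffContent

variable {X : Type*} {s : ℝ}

theorem hausdorffContent_le_ediam_rpow [PseudoEMetricSpace X] (A : Set X) :
    hausdorffContent X s A ≤ ediam A ^ s :=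
  OuterMeasure.boundedBy_le A

theorem hausdorffContent_singleton [PseudoEMetricSpace X] (hs : 0 < s) (x : X) :
    hausdorffContent X s {x} = 0 := by
  simpa [hs] using hausdorffContent_le_ediam_rpow (s := s) {x}

theorem hausdorffMeasure_eq_zero_of_hausdorffContent_eq_zero [EMetricSpace X]
    [MeasurableSpace X] [BorelSpace X] (hs : 0 < s) {A : Set X}
    (hA : hausdorffContent X s A = 0) : μH[s] A = 0 := by
  rw [← nonpos_iff_eq_zero, Measure.hausdorffMeasure_apply]
  refine iSup₂_le fun r hr ↦ le_of_forall_gt fun ε hε ↦ ?_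
  -- A cover with `∑ (diam A_n)^s < r^s` automatically has mesh at most `r`.
  have hlt : hausdorffContent X s A < min ε (r ^ s) := by
    simp [hA, hε, ENNReal.rpow_pos_of_nonneg hr hs.le]
  rw [hausdorffContent, OuterMeasure.boundedBy_apply] at hlt
  simp only [iInf_lt_iff] at hlt ⊢
  obtain ⟨t, hcover, hsum⟩ := hlt
  refine ⟨t, hcover, fun n ↦ ?_, hsum.trans_le (min_le_left _ _)⟩
  rcases (t n).eq_empty_or_nonempty with hempty | hne
  · simp [hempty]
  rw [← ENNReal.rpow_le_rpow_iff hs]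
  calc ediam (t n) ^ s = ⨆ _ : (t n).Nonempty, ediam (t n) ^ s := by rw [iSup_pos hne]
    _ ≤ ∑' k, ⨆ _ : (t k).Nonempty, ediam (t k) ^ s := ENNReal.le_tsum n
    _ ≤ r ^ s := hsum.le.trans (min_le_right _ _)

end HausdorffContent

/-- An ordered (extended) metric space is `C`-monotone if `diam [a, b] ≤ C * d(a, b)` for all
`a ≤ b`. Diameters are taken in `ℝ≥0∞`, so that in a metric space order intervals are bounded. -/
def IsMonotoneSpaceWith (C : ℝ≥0) (X : Type*) [PseudoEMetricSpace X] [Preorder X] : Prop :=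
  ∀ ⦃a b : X⦄, a ≤ b → ediam (Icc a b) ≤ C * edist a b

namespace IsMonotoneSpaceWith

variable {X : Type*} {C : ℝ≥0}

section Preorder

variable [Preorder X]

theorem of_diam_le [PseudoMetricSpace X] [BoundedSpace X] {K : ℝ}
    (hX : ∀ a b : X, a ≤ b → diam (Icc a b) ≤ K * dist a b) :
    IsMonotoneSpaceWith K.toNNReal X := by
  intro a b hab
  calc ediam (Icc a b) = ENNReal.ofReal (diam (Icc a b)) :=
        (ENNReal.ofReal_toReal (Bornology.IsBounded.all _).ediam_ne_top).symm
    _ ≤ ENNReal.ofReal (K * dist a b) := ENNReal.ofReal_le_ofReal (hX a b hab)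
    _ = K.toNNReal * edist a b := by rw [ENNReal.ofReal_mul' dist_nonneg, edist_dist]; rfl

theorem dual [PseudoEMetricSpace X] (hX : IsMonotoneSpaceWith C X) :
    IsMonotoneSpaceWith C Xᵒᵈ := by
  intro a b hab
  rw [edist_comm]
  exact (congrArg ediam Icc_toDual).trans_le (hX hab)

theorem ediam_Icc_ne_top [PseudoMetricSpace X] (hX : IsMonotoneSpaceWith C X) {a b : X}
    (hab : a ≤ b) : ediam (Icc a b) ≠ ∞ :=
  ne_top_of_le_ne_top (ENNReal.mul_ne_top ENNReal.coe_ne_top (edist_ne_top a b)) (hX hab)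

theorem hausdorffContent_Icc_le [PseudoEMetricSpace X] (hX : IsMonotoneSpaceWith C X) (s : ℝ≥0)
    {a b : X} (hab : a ≤ b) :
    hausdorffContent X s (Icc a b) ≤ (C ^ (s : ℝ) : ℝ≥0) * edist a b ^ (s : ℝ) := calc
  hausdorffContent X s (Icc a b) ≤ ediam (Icc a b) ^ (s : ℝ) := hausdorffContent_le_ediam_rpow _
  _ ≤ (C * edist a b) ^ (s : ℝ) := ENNReal.rpow_le_rpow (hX hab) s.coe_nonneg
  _ = (C ^ (s : ℝ) : ℝ≥0) * edist a b ^ (s : ℝ) := by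
    rw [ENNReal.mul_rpow_of_nonneg _ _ s.coe_nonneg, ENNReal.coe_rpow_of_nonneg _ s.coe_nonneg]

end Preorder

variable [LinearOrder X]

theorem closedIicTopology [EMetricSpace X] (hX : IsMonotoneSpaceWith C X) :
    ClosedIicTopology X where
  isClosed_Iic a := by
    refine isClosed_of_closure_subset fun x hx ↦ le_of_not_gt fun hax ↦ hax.ne' ?_
    have hsub : Iic a ⊆ {y | edist x a ≤ C * edist y x} := fun y hya ↦
      (edist_le_ediam_of_mem (right_mem_Icc.2 (hya.trans hax.le)) ⟨hya, hax.le⟩).trans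
        (hX (hya.trans hax.le))
    have hclosed : IsClosed {y | edist x a ≤ C * edist y x} :=
      isClosed_le continuous_const ((ENNReal.continuous_const_mul ENNReal.coe_ne_top).comp
        (continuous_id.edist continuous_const))
    simpa using closure_minimal hsub hclosed hx

theorem closedIciTopology [EMetricSpace X] (hX : IsMonotoneSpaceWith C X) :
    ClosedIciTopology X where
  isClosed_Ici a :=
    have := hX.dual.closedIicTopology
    isClosed_Iic (a := OrderDual.toDual a)

theorem compactIccSpace [MetricSpace X] [ProperSpace X] (hX : IsMonotoneSpaceWith C X) :
    CompactIccSpace X where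
  isCompact_Icc {a b} := by
    have := hX.closedIicTopology
    have := hX.closedIciTopology
    rcases le_or_gt a b with hab | hba
    · exact isCompact_of_isClosed_isBounded (isClosed_Ici.inter isClosed_Iic)
        (isBounded_iff_ediam_ne_top.2 (hX.ediam_Icc_ne_top hab))
    · simp [Icc_eq_empty_of_lt hba]

theorem exists_holderWith_range_eq_Icc [MetricSpace X] [ProperSpace X]
    (hX : IsMonotoneSpaceWith C X) {s : ℝ≥0} (hs : 0 < s)
    (hpos : hausdorffContent X s univ ≠ 0) :
    ∃ g : X → ℝ, HolderWith (C ^ (s : ℝ)) s g ∧ ∃ a b : ℝ, a < b ∧ range g = Icc a b := by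
  have := hX.closedIicTopology
  have := hX.closedIciTopology
  have := hX.compactIccSpace
  obtain ⟨p, q, hpq, hpos⟩ := exists_measure_Icc_ne_zero_of_measure_univ_ne_zero hpos
  have hfin : hausdorffContent X s (Icc p q) ≠ ∞ := ne_top_of_le_ne_top
    (ENNReal.rpow_ne_top_of_nonneg s.coe_nonneg (hX.ediam_Icc_ne_top hpq))
    (hausdorffContent_le_ediam_rpow _)
  set m := OuterMeasure.restrict (Icc p q) (hausdorffContent X s)
  have hincr (x y : X) (hxy : x ≤ y) :
      m (Ioc x y) ≤ (C ^ (s : ℝ) : ℝ≥0) * edist x y ^ (s : ℝ) := by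
    rw [OuterMeasure.restrict_apply]
    exact (measure_mono (inter_subset_left.trans Ioc_subset_Icc_self)).trans
      (hX.hausdorffContent_Icc_le s hxy)
  have hg : HolderWith (C ^ (s : ℝ)) s (distributionFunction m) :=
    holderWith_distributionFunction (by simpa [m] using hfin) hincr
  exact ⟨distributionFunction m, hg, 0, (hausdorffContent X s (Icc p q)).toReal,
    ENNReal.toReal_pos hpos hfin, range_distributionFunction_restrict_Icc hpq hfin
      (hausdorffContent_singleton (mod_cast hs)) (hg.continuous hs)⟩

end IsMonotoneSpaceWith

theorem monotone_space_exists_holder_onto_interval_general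
    {X : Type*} [MetricSpace X] [ProperSpace X] [MeasurableSpace X] [BorelSpace X]
    (hmon : ∃ (_ : LinearOrder X) (C : ℝ≥0), IsMonotoneSpaceWith C X)
    (s : ℝ) (hs : 0 < s) (hpos : 0 < μH[s] (univ : Set X)) :
    ∃ (g : X → ℝ) (K : ℝ),
      (∀ x y : X, |g x - g y| ≤ K * dist x y ^ s) ∧
      ∃ a b : ℝ, a < b ∧ range g = Icc a b := by
  obtain ⟨_, C, hX⟩ := hmon
  lift s to ℝ≥0 using hs.le
  obtain ⟨g, hg, hrange⟩ := hX.exists_holderWith_range_eq_Icc (mod_cast hs) fun h ↦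
    hpos.ne' (hausdorffMeasure_eq_zero_of_hausdorffContent_eq_zero hs h)
  exact ⟨g, C ^ (s : ℝ), fun x y ↦ mod_cast hg.dist_le x y, hrange⟩

/-- If `(X,d)` is a nonempty compact monotone metric space with positive
`s`-dimensional Hausdorff measure `H^s(X) > 0` for some real `s > 0`, then there exists an
`s`-Hölder function `g : X → ℝ` whose image `g(X)` is a non-degenerate closed interval.

Here `X` is monotone if there is a linear order `≤` on `X` and a constant `C` such that
`diam {x : a ≤ x ≤ b} ≤ C * d(a,b)` for all `a ≤ b` in `X`. -/
theorem monotone_space_exists_holder_onto_interval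
    {X : Type*} [MetricSpace X] [CompactSpace X] [Nonempty X]
    [MeasurableSpace X] [BorelSpace X]
    (hmon : ∃ (r : LinearOrder X) (C : ℝ),
      ∀ a b : X, r.le a b → Metric.diam {x | r.le a x ∧ r.le x b} ≤ C * dist a b)
    (s : ℝ) (hs : 0 < s)
    (hpos : 0 < μH[s] (Set.univ : Set X)) :
    ∃ (g : X → ℝ) (K : ℝ),
      (∀ x y : X, |g x - g y| ≤ K * dist x y ^ s) ∧
      ∃ a b : ℝ, a < b ∧ Set.range g = Set.Icc a b := by
  obtain ⟨r, C, hC⟩ := hmon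
  exact monotone_space_exists_holder_onto_interval_general
    ⟨r, C.toNNReal, IsMonotoneSpaceWith.of_diam_le hC⟩ s hs hpos
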